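/- Let 1/2 ≤ α < 1, let c > 0 and let 0 < β < 1/2. Define u(x,t) = (1/π) ∫_0^∞ E_α((1−ξ²) t^α) cos(xξ) dξ for x ∈ ℝ and t > 0. Then for every ε > 0 there exists T > 0 such that for all t ≥ T one has u(c·t^β, t) ≥ (1−ε)·c·α·t^{β−2α}·E_α(t^α); in other words, u(c·t^β, t) ≥ c·α·t^{β−2α}·E_α(t^α)·[1−o(1)] as t → +∞. -/

import Mathlib

open Real MeasureTheory

/-- The Mittag-Leffler function `E_α(r) = ∑ r^k / Γ(1+kα)`. -/
noncomputable def mittagLeffler (α r : ℝ) : ℝ :=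
  ∑' k : ℕ, r ^ k / Real.Gamma (1 + k * α)

/-- The fundamental solution of the one-dimensional time-fractional reaction-diffusion
problem `∂_t^α u − u_xx = u` with a Dirac delta initial datum (case `a = d = 1`). -/
noncomputable def fundSol (α x t : ℝ) : ℝ :=
  (1 / π) * ∫ ξ in Set.Ioi (0 : ℝ), mittagLeffler α ((1 - ξ ^ 2) * t ^ α) * Real.cos (x * ξ)

/-!
Near `ξ = 0` the Fourier integral defining `fundSol` has size about `t^(-1/2) E_α(t^α)`, far more
than `t^(β - 2α) E_α(t^α)`; the point is that nothing else can cancel it.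

The mass of the series `E_α(t^α)` sits at indices `k` of order `t`. Multiplying the argument by
`1 - δ` multiplies the `k`-th term by `(1 - δ)^k`, which is harmless when `δ ≤ κ / t` and costs a
factor `exp (-b t δ)` for every `δ ∈ [0, 1]`. Taking `δ = ξ²`, the part `ξ ≤ √(κ / t)` of the
integral is at least a multiple of `t^(-1/2) E_α(t^α)`, because `cos (x ξ) ≥ 1/2` as long as
`|x| ξ ≤ 1`. If `|x| ≤ t^γ` with `γ < 1/2`, the integrand stays nonnegative up to `ξ = t^(-γ)`, and
from there to `ξ = 1` it is smaller than `E_α(t^α)` by a factor `exp (-b t^(1 - 2γ))`.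

For `ξ > 1` the integrand is bounded by a multiple of `ξ^(-2)` because `E_α(-s) = O(1 / (1 + s))`.
This decay follows from a maximum principle for the fractional equation `∂_t^α y = -y` solved by
`y(t) = E_α(-t^α)`.
-/

open Set Filter Topology

lemma Gamma_add_le_rpow_mul_Gamma {x z : ℝ} (hx : 0 < x) (hz : 0 < z) :
    Gamma (x + z) ≤ (x + z) ^ z * Gamma x := by
  have hxz : 0 < x + z := by positivity
  have hslope := convexOn_log_Gamma.slope_mono_adjacent (x := x) (y := x + z) (z := x + z + 1)
    hx (mem_Ioi.2 (by positivity)) (by linarith) (by linarith)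
  simp only [Function.comp_apply, add_sub_cancel_left, div_one] at hslope
  rw [Gamma_add_one hxz.ne', log_mul hxz.ne' (Gamma_pos_of_pos hxz).ne', add_sub_cancel_right,
    div_le_iff₀ hz] at hslope
  have hΓ := Gamma_pos_of_pos hx
  rw [← log_le_log_iff (Gamma_pos_of_pos hxz) (by positivity), log_mul (by positivity) hΓ.ne',
    log_rpow hxz]
  linarith

lemma rpow_mul_Gamma_add_one_le {x z : ℝ} (hx : 0 < x) (hz : 0 < z) :
    x ^ z * Gamma (x + 1) ≤ Gamma (x + 1 + z) := by
  have hslope := convexOn_log_Gamma.slope_mono_adjacent (x := x) (y := x + 1) (z := x + 1 + z)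
    hx (mem_Ioi.2 (by positivity)) (by linarith) (by linarith)
  simp only [Function.comp_apply, add_sub_cancel_left, div_one] at hslope
  have hlog : log (Gamma (x + 1)) = log x + log (Gamma x) := by
    rw [Gamma_add_one hx.ne', log_mul hx.ne' (Gamma_pos_of_pos hx).ne']
  rw [le_div_iff₀ hz] at hslope
  have hΓ : 0 < Gamma (x + 1) := Gamma_pos_of_pos (by positivity)
  rw [← log_le_log_iff (by positivity) (Gamma_pos_of_pos (by positivity)),
    log_mul (by positivity) hΓ.ne', log_rpow hx]
  nlinarith

/-- The `k`-th term of the series defining `mittagLeffler α r`. -/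
noncomputable def mittagLefflerTerm (α r : ℝ) (k : ℕ) : ℝ :=
  r ^ k / Gamma (1 + k * α)

section Series

variable {α : ℝ}

lemma Gamma_one_add_nat_mul_pos (hα : 0 ≤ α) (k : ℕ) : 0 < Gamma (1 + k * α) :=
  Gamma_pos_of_pos (by positivity)

lemma mittagLefflerTerm_zero (α r : ℝ) : mittagLefflerTerm α r 0 = 1 := by
  simp [mittagLefflerTerm]

lemma mittagLefflerTerm_nonneg (hα : 0 ≤ α) {r : ℝ} (hr : 0 ≤ r) (k : ℕ) :
    0 ≤ mittagLefflerTerm α r k :=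
  div_nonneg (by positivity) (Gamma_one_add_nat_mul_pos hα k).le

lemma norm_mittagLefflerTerm (hα : 0 ≤ α) (r : ℝ) (k : ℕ) :
    ‖mittagLefflerTerm α r k‖ = mittagLefflerTerm α |r| k := by
  rw [mittagLefflerTerm, norm_div, norm_pow, norm_eq_abs,
    norm_of_nonneg (Gamma_one_add_nat_mul_pos hα k).le, mittagLefflerTerm]

lemma mittagLefflerTerm_mul (α c r : ℝ) (k : ℕ) :
    mittagLefflerTerm α (c * r) k = c ^ k * mittagLefflerTerm α r k := by
  rw [mittagLefflerTerm, mul_pow, mul_div_assoc, mittagLefflerTerm]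

lemma mittagLefflerTerm_mono (hα : 0 ≤ α) {r s : ℝ} (hr : 0 ≤ r) (hrs : r ≤ s) (k : ℕ) :
    mittagLefflerTerm α r k ≤ mittagLefflerTerm α s k := by
  have := Gamma_one_add_nat_mul_pos hα k
  unfold mittagLefflerTerm
  gcongr

lemma pow_mul_mittagLefflerTerm_le (hα : 0 < α) {r : ℝ} (hr : 0 ≤ r) {n : ℕ} (hn : 0 < n) (k : ℕ) :
    r ^ n * mittagLefflerTerm α r k ≤
      (1 + (k + n : ℕ) * α) ^ (n * α) * mittagLefflerTerm α r (k + n) := by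
  have hΓk := Gamma_one_add_nat_mul_pos hα.le k
  have hΓkn := Gamma_one_add_nat_mul_pos hα.le (k + n)
  have hΓ := Gamma_add_le_rpow_mul_Gamma (x := 1 + k * α) (z := n * α) (by positivity)
    (by positivity)
  rw [show 1 + k * α + n * α = 1 + (k + n : ℕ) * α by push_cast; ring] at hΓ
  unfold mittagLefflerTerm
  rw [← mul_div_assoc, ← mul_div_assoc, div_le_div_iff₀ hΓk hΓkn]
  calc r ^ n * r ^ k * Gamma (1 + (k + n : ℕ) * α)
      ≤ r ^ n * r ^ k * ((1 + (k + n : ℕ) * α) ^ (n * α) * Gamma (1 + k * α)) := by gcongr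
    _ = (1 + (k + n : ℕ) * α) ^ (n * α) * r ^ (k + n) * Gamma (1 + k * α) := by ring

lemma mittagLefflerTerm_succ_le (hα : 0 < α) {r : ℝ} (hr : 0 ≤ r) {k : ℕ} (hk : 0 < k) :
    mittagLefflerTerm α r (k + 1) ≤ r / (k * α) ^ α * mittagLefflerTerm α r k := by
  have := Gamma_one_add_nat_mul_pos hα.le k
  have hΓ := rpow_mul_Gamma_add_one_le (x := k * α) (by positivity) hα
  rw [show k * α + 1 + α = 1 + (k + 1 : ℕ) * α by push_cast; ring, add_comm (k * α)] at hΓ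
  calc r ^ (k + 1) / Gamma (1 + (k + 1 : ℕ) * α)
      ≤ r ^ (k + 1) / ((k * α) ^ α * Gamma (1 + k * α)) := by gcongr
    _ = r / (k * α) ^ α * mittagLefflerTerm α r k := by
      rw [mittagLefflerTerm, pow_succ', div_mul_div_comm]

lemma summable_mittagLefflerTerm (hα : 0 < α) (r : ℝ) : Summable (mittagLefflerTerm α r) := by
  refine summable_of_ratio_norm_eventually_le (r := 1 / 2) (by norm_num) ?_
  have hgrowth : Tendsto (fun k : ℕ => (k * α) ^ α) atTop atTop :=
    (tendsto_rpow_atTop hα).comp (tendsto_natCast_atTop_atTop.atTop_mul_const hα)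
  filter_upwards [eventually_gt_atTop 0, hgrowth.eventually_ge_atTop (2 * |r|)] with k hk hkr
  rw [norm_mittagLefflerTerm hα.le, norm_mittagLefflerTerm hα.le]
  refine (mittagLefflerTerm_succ_le hα (abs_nonneg r) hk).trans
    (mul_le_mul_of_nonneg_right ?_ (mittagLefflerTerm_nonneg hα.le (abs_nonneg r) k))
  rw [div_le_iff₀ (by positivity)]
  linarith

lemma hasSum_mittagLeffler (hα : 0 < α) (r : ℝ) :
    HasSum (mittagLefflerTerm α r) (mittagLeffler α r) :=
  (summable_mittagLefflerTerm hα r).hasSum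

lemma mittagLeffler_zero (hα : 0 < α) : mittagLeffler α 0 = 1 := by
  rw [← (hasSum_mittagLeffler hα 0).tsum_eq, tsum_eq_single 0 fun k hk => by
    simp [mittagLefflerTerm, hk], mittagLefflerTerm_zero]

lemma continuous_mittagLeffler (hα : 0 < α) : Continuous (mittagLeffler α) := by
  refine continuous_iff_continuousAt.2 fun x => ?_
  have hcont : ContinuousOn (mittagLeffler α) (Metric.ball 0 (|x| + 1)) := by
    refine continuousOn_tsum (fun k => by fun_prop)
      (summable_mittagLefflerTerm hα (|x| + 1)) fun k y hy => ?_
    exact (norm_mittagLefflerTerm hα.le y k).trans_le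
      (mittagLefflerTerm_mono hα.le (abs_nonneg y) (mem_ball_zero_iff.1 hy).le k)
  exact hcont.continuousAt (Metric.isOpen_ball.mem_nhds (by simp))

lemma mittagLefflerTerm_le_mittagLeffler (hα : 0 < α) {r : ℝ} (hr : 0 ≤ r) (k : ℕ) :
    mittagLefflerTerm α r k ≤ mittagLeffler α r :=
  (summable_mittagLefflerTerm hα r).le_tsum k fun j _ => mittagLefflerTerm_nonneg hα.le hr j

lemma mittagLeffler_pos (hα : 0 < α) {r : ℝ} (hr : 0 ≤ r) : 0 < mittagLeffler α r :=
  zero_lt_one.trans_le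
    ((mittagLefflerTerm_zero α r).symm.trans_le (mittagLefflerTerm_le_mittagLeffler hα hr 0))

lemma monotoneOn_mittagLeffler (hα : 0 < α) : MonotoneOn (mittagLeffler α) (Ici 0) :=
  fun _ hr _ _ hrs => (summable_mittagLefflerTerm hα _).tsum_le_tsum
    (mittagLefflerTerm_mono hα.le hr hrs) (summable_mittagLefflerTerm hα _)

lemma tendsto_rpow_mul_mittagLeffler_rpow_atTop (hα : 0 < α) (s : ℝ) :
    Tendsto (fun t => t ^ s * mittagLeffler α (t ^ α)) atTop atTop := by
  obtain ⟨n, hn⟩ := exists_nat_gt (-s / α)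
  have hexp : 0 < s + n * α := by
    rw [div_lt_iff₀ hα] at hn
    linarith
  refine tendsto_atTop_mono' atTop ?_
    ((tendsto_rpow_atTop hexp).atTop_div_const (Gamma_one_add_nat_mul_pos hα.le n))
  filter_upwards [eventually_gt_atTop 0] with t ht
  calc t ^ (s + n * α) / Gamma (1 + n * α) = t ^ s * mittagLefflerTerm α (t ^ α) n := by
        rw [mittagLefflerTerm, rpow_add ht, mul_comm (n : ℝ), rpow_mul_natCast ht.le, mul_div_assoc]
    _ ≤ t ^ s * mittagLeffler α (t ^ α) := by
        gcongr
        exact mittagLefflerTerm_le_mittagLeffler hα (by positivity) n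

end Series

section Concentration

variable {α : ℝ}

lemma mittagLefflerTerm_rpow_le_of_lt (hα : 0 < α) {t : ℝ} {k N : ℕ} (hkN : k < N)
    (hN : exp 1 * (1 + 2 * N * α) ≤ t) :
    mittagLefflerTerm α (t ^ α) k ≤ exp (-(N * α)) * mittagLefflerTerm α (t ^ α) (k + N) := by
  have ht : 0 < t := lt_of_lt_of_le (by positivity) hN
  have hr : 0 ≤ t ^ α := by positivity
  have hterm := mittagLefflerTerm_nonneg hα.le hr (k + N)
  have hbase : 1 + (k + N : ℕ) * α ≤ exp (-1) * t := by
    rw [exp_neg, ← div_eq_inv_mul, le_div_iff₀' (exp_pos 1)]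
    refine le_trans ?_ hN
    have : ((k + N : ℕ) : ℝ) ≤ 2 * N := by
      norm_cast
      lia
    gcongr
  have hpow : (exp (-1) * t) ^ (N * α) = (t ^ α) ^ N * exp (-(N * α)) := by
    rw [mul_rpow (exp_pos _).le ht.le, ← exp_mul, ← rpow_mul_natCast ht.le, mul_comm α,
      neg_one_mul, mul_comm]
  refine le_of_mul_le_mul_left ?_ (show 0 < (t ^ α) ^ N by positivity)
  calc (t ^ α) ^ N * mittagLefflerTerm α (t ^ α) k
      ≤ (1 + (k + N : ℕ) * α) ^ (N * α) * mittagLefflerTerm α (t ^ α) (k + N) :=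
        pow_mul_mittagLefflerTerm_le hα hr (by lia) k
    _ ≤ (exp (-1) * t) ^ (N * α) * mittagLefflerTerm α (t ^ α) (k + N) := by gcongr
    _ = (t ^ α) ^ N * (exp (-(N * α)) * mittagLefflerTerm α (t ^ α) (k + N)) := by
      rw [hpow, mul_assoc]

lemma tsum_mittagLefflerTerm_add_le (hα : 0 < α) {r : ℝ} (hr : 0 ≤ r) (n : ℕ) :
    ∑' k, mittagLefflerTerm α r (k + n) ≤ mittagLeffler α r := by
  rw [← (hasSum_mittagLeffler hα r).tsum_eq,
    ← (summable_mittagLefflerTerm hα r).sum_add_tsum_nat_add n]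
  exact le_add_of_nonneg_left
    (Finset.sum_nonneg fun k _ => mittagLefflerTerm_nonneg hα.le hr k)

-- The terms of index `k ≥ N` lose a factor `(1 - δ)^N`; each of the others is `exp (-N α)` times
-- smaller than the term `N` places further on.
lemma mittagLeffler_one_sub_mul_rpow_le (hα : 0 < α) {t δ : ℝ} {N : ℕ}
    (hN : exp 1 * (1 + 2 * N * α) ≤ t) (hδ : δ ∈ Icc (0 : ℝ) 1) :
    mittagLeffler α ((1 - δ) * t ^ α) ≤
      (exp (-(N * δ)) + exp (-(N * α))) * mittagLeffler α (t ^ α) := by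
  have hr : 0 ≤ t ^ α := rpow_nonneg (le_trans (by positivity) hN) α
  have hterm := mittagLefflerTerm_nonneg hα.le hr
  have hδ' : 0 ≤ 1 - δ := sub_nonneg.2 hδ.2
  have hle (k : ℕ) : mittagLefflerTerm α ((1 - δ) * t ^ α) k ≤
      exp (-(N * δ)) * mittagLefflerTerm α (t ^ α) k +
        exp (-(N * α)) * mittagLefflerTerm α (t ^ α) (k + N) := by
    rw [mittagLefflerTerm_mul]
    rcases lt_or_ge k N with hk | hk
    · calc (1 - δ) ^ k * mittagLefflerTerm α (t ^ α) k ≤ mittagLefflerTerm α (t ^ α) k :=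
            mul_le_of_le_one_left (hterm k) (pow_le_one₀ hδ' (sub_le_self 1 hδ.1))
        _ ≤ exp (-(N * α)) * mittagLefflerTerm α (t ^ α) (k + N) :=
            mittagLefflerTerm_rpow_le_of_lt hα hk hN
        _ ≤ _ := le_add_of_nonneg_left (mul_nonneg (exp_pos _).le (hterm k))
    · have hpow : (1 - δ) ^ k ≤ exp (-(N * δ)) :=
        calc (1 - δ) ^ k ≤ (1 - δ) ^ N := pow_le_pow_of_le_one hδ' (sub_le_self 1 hδ.1) hk
          _ ≤ exp (-δ) ^ N := pow_le_pow_left₀ hδ' (one_sub_le_exp_neg δ) N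
          _ = exp (-(N * δ)) := by rw [← exp_nat_mul, mul_neg]
      exact (mul_le_mul_of_nonneg_right hpow (hterm k)).trans
        (le_add_of_nonneg_right (mul_nonneg (exp_pos _).le (hterm _)))
  have hsum := (summable_mittagLefflerTerm hα (t ^ α))
  have hshift := (summable_nat_add_iff N).2 hsum
  calc mittagLeffler α ((1 - δ) * t ^ α)
      ≤ exp (-(N * δ)) * mittagLeffler α (t ^ α) +
          exp (-(N * α)) * ∑' k, mittagLefflerTerm α (t ^ α) (k + N) :=
        hasSum_le hle (hasSum_mittagLeffler hα _)
          ((hsum.hasSum.mul_left _).add (hshift.hasSum.mul_left _))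
    _ ≤ exp (-(N * δ)) * mittagLeffler α (t ^ α) +
          exp (-(N * α)) * mittagLeffler α (t ^ α) := by
        gcongr
        exact tsum_mittagLefflerTerm_add_le hα hr N
    _ = _ := by ring

lemma exists_mittagLeffler_one_sub_mul_rpow_le (hα : 0 < α) :
    ∃ b > 0, ∀ᶠ t in atTop, ∀ δ ∈ Icc (0 : ℝ) 1,
      mittagLeffler α ((1 - δ) * t ^ α) ≤ 2 * exp (-(b * t * δ)) * mittagLeffler α (t ^ α) := by
  set η := (exp 1 * (1 + 2 * α))⁻¹
  have hη0 : 0 < η := by positivity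
  refine ⟨η / 2 * min 1 α, by positivity, ?_⟩
  filter_upwards [eventually_ge_atTop (2 / η)] with t ht δ hδ
  have hηt : 2 ≤ η * t := (div_le_iff₀' hη0).1 ht
  set N := ⌊η * t⌋₊
  have hN_le : (N : ℝ) ≤ η * t := Nat.floor_le (by linarith)
  have hN_ge : η / 2 * t ≤ N := by linarith [Nat.lt_floor_add_one (η * t)]
  have hN_one : (1 : ℝ) ≤ N := by linarith
  have hNt : exp 1 * (1 + 2 * N * α) ≤ t :=
    calc exp 1 * (1 + 2 * N * α) ≤ exp 1 * (N + 2 * N * α) := by gcongr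
      _ = exp 1 * (1 + 2 * α) * N := by ring
      _ ≤ t := by rwa [← le_inv_mul_iff₀ (by positivity)]
  have ht0 : 0 ≤ t := le_trans (by positivity) ht
  have hδ0 : 0 ≤ δ := hδ.1
  have hexp_δ : exp (-(N * δ)) ≤ exp (-(η / 2 * min 1 α * t * δ)) := by
    gcongr exp (-?_)
    calc η / 2 * min 1 α * t * δ ≤ η / 2 * 1 * t * δ := by
          gcongr
          exact min_le_left 1 α
      _ ≤ N * δ := by rw [mul_one]; gcongr
  have hexp_α : exp (-(N * α)) ≤ exp (-(η / 2 * min 1 α * t * δ)) := by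
    gcongr exp (-?_)
    calc η / 2 * min 1 α * t * δ ≤ η / 2 * α * t * 1 := by
          gcongr
          exacts [min_le_right 1 α, hδ.2]
      _ = η / 2 * t * α := by ring
      _ ≤ N * α := by gcongr
  refine (mittagLeffler_one_sub_mul_rpow_le hα hNt hδ).trans ?_
  have := mittagLeffler_pos hα (rpow_nonneg ht0 α)
  rw [two_mul]
  gcongr

lemma one_sub_div_rpow_mul_mittagLeffler_le_sum_range (hα : 0 < α) {r : ℝ} (hr : 0 ≤ r) {N : ℕ}
    (hN : 0 < N) :
    (1 - r / (N * α) ^ α) * mittagLeffler α r ≤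
      ∑ k ∈ Finset.range (N + 1), mittagLefflerTerm α r k := by
  have hsum := summable_mittagLefflerTerm hα r
  have htail : ∑' k, mittagLefflerTerm α r (k + (N + 1)) ≤ r / (N * α) ^ α * mittagLeffler α r :=
    calc ∑' k, mittagLefflerTerm α r (k + (N + 1))
        ≤ ∑' k, r / (N * α) ^ α * mittagLefflerTerm α r (k + N) := by
          refine ((summable_nat_add_iff (N + 1)).2 hsum).tsum_le_tsum (fun k => ?_)
            (((summable_nat_add_iff N).2 hsum).mul_left _)
          have hterm := mittagLefflerTerm_nonneg hα.le hr (k + N)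
          refine (mittagLefflerTerm_succ_le hα hr (by lia : 0 < k + N)).trans ?_
          gcongr
          lia
      _ ≤ r / (N * α) ^ α * mittagLeffler α r := by
          rw [tsum_mul_left]
          gcongr
          exact tsum_mittagLefflerTerm_add_le hα hr N
  have hsplit : ∑ k ∈ Finset.range (N + 1), mittagLefflerTerm α r k +
      ∑' k, mittagLefflerTerm α r (k + (N + 1)) = mittagLeffler α r :=
    hsum.sum_add_tsum_nat_add (N + 1)
  linarith

lemma one_sub_mul_mittagLeffler_le (hα : 0 < α) {r δ : ℝ} (hr : 0 ≤ r) {N : ℕ} (hN : 0 < N)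
    (hδ : 0 ≤ δ) (hNδ : N * δ ≤ 1) :
    (1 - N * δ) * (1 - r / (N * α) ^ α) * mittagLeffler α r ≤ mittagLeffler α ((1 - δ) * r) := by
  have hN_one : (1 : ℝ) ≤ N := mod_cast hN
  have hδ_one : 0 ≤ 1 - δ := by nlinarith
  have hbernoulli : ∀ k ∈ Finset.range (N + 1),
      (1 - N * δ) * mittagLefflerTerm α r k ≤ mittagLefflerTerm α ((1 - δ) * r) k := by
    intro k hk
    have hkN : (k : ℝ) ≤ N := mod_cast Finset.mem_range_succ_iff.1 hk
    rw [mittagLefflerTerm_mul]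
    refine mul_le_mul_of_nonneg_right ?_ (mittagLefflerTerm_nonneg hα.le hr k)
    calc 1 - N * δ ≤ 1 + k * (-δ) := by nlinarith
      _ ≤ (1 + -δ) ^ k := one_add_mul_le_pow (by linarith) k
      _ = (1 - δ) ^ k := by rw [← sub_eq_add_neg]
  calc (1 - N * δ) * (1 - r / (N * α) ^ α) * mittagLeffler α r
      ≤ (1 - N * δ) * ∑ k ∈ Finset.range (N + 1), mittagLefflerTerm α r k := by
        rw [mul_assoc]
        exact mul_le_mul_of_nonneg_left (one_sub_div_rpow_mul_mittagLeffler_le_sum_range hα hr hN)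
          (sub_nonneg.2 hNδ)
    _ ≤ ∑ k ∈ Finset.range (N + 1), mittagLefflerTerm α ((1 - δ) * r) k := by
        rw [Finset.mul_sum]
        exact Finset.sum_le_sum hbernoulli
    _ ≤ mittagLeffler α ((1 - δ) * r) :=
        (summable_mittagLefflerTerm hα _).sum_le_tsum _ fun k _ =>
          mittagLefflerTerm_nonneg hα.le (mul_nonneg hδ_one hr) k

lemma exists_le_mittagLeffler_one_sub_mul_rpow (hα : 0 < α) :
    ∃ κ ∈ Ioc (0 : ℝ) 1, ∀ t ≥ 1, ∀ δ ∈ Icc 0 (κ / t),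
      mittagLeffler α (t ^ α) / 4 ≤ mittagLeffler α ((1 - δ) * t ^ α) := by
  set L := 2 ^ α⁻¹ / α
  have hL : 0 < L := by positivity
  refine ⟨1 / (2 * (L + 1)), ⟨by positivity, ?_⟩, fun t ht δ hδ => ?_⟩
  · rw [div_le_one (by positivity)]
    linarith
  set N := ⌈L * t⌉₊
  have hLt : 0 < L * t := by positivity
  have hN_le : (N : ℝ) ≤ (L + 1) * t := by linarith [Nat.ceil_lt_add_one hLt.le]
  have hNδ : N * δ ≤ 1 / 2 :=
    calc N * δ ≤ (L + 1) * t * (1 / (2 * (L + 1)) / t) :=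
          mul_le_mul hN_le hδ.2 hδ.1 (by positivity)
      _ = 1 / 2 := by field_simp
  have hratio : t ^ α / (N * α) ^ α ≤ 1 / 2 := by
    have hbase : 2 ^ α⁻¹ * t ≤ N * α :=
      calc 2 ^ α⁻¹ * t = L * t * α := by simp only [L]; field_simp
        _ ≤ N * α := by gcongr; exact Nat.le_ceil _
    calc t ^ α / (N * α) ^ α ≤ t ^ α / (2 ^ α⁻¹ * t) ^ α := by gcongr
      _ = 1 / 2 := by
        rw [mul_rpow (by positivity) (by positivity), rpow_inv_rpow zero_le_two hα.ne']
        field_simp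
  have hr : 0 ≤ t ^ α := by positivity
  have hE := mittagLeffler_pos hα hr
  calc mittagLeffler α (t ^ α) / 4
      = (1 - 1 / 2) * (1 - 1 / 2) * mittagLeffler α (t ^ α) := by ring
    _ ≤ (1 - N * δ) * (1 - t ^ α / (N * α) ^ α) * mittagLeffler α (t ^ α) := by
        gcongr
        linarith
    _ ≤ mittagLeffler α ((1 - δ) * t ^ α) :=
        one_sub_mul_mittagLeffler_le hα hr (Nat.ceil_pos.2 hLt) hδ.1 (by linarith)

end Concentration

section FractionalDerivative

lemma ofReal_rpow_mul_one_sub_rpow (p q : ℝ) {x : ℝ} (hx : x ∈ Icc (0 : ℝ) 1) :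
    ((x ^ (p - 1) * (1 - x) ^ (q - 1) : ℝ) : ℂ) =
      (x : ℂ) ^ ((p : ℂ) - 1) * (1 - (x : ℂ)) ^ ((q : ℂ) - 1) := by
  push_cast [Complex.ofReal_cpow hx.1, Complex.ofReal_cpow (sub_nonneg.2 hx.2)]
  rfl

lemma intervalIntegrable_beta {p q : ℝ} (hp : 0 < p) (hq : 0 < q) :
    IntervalIntegrable (fun x => x ^ (p - 1) * (1 - x) ^ (q - 1)) volume 0 1 := by
  refine (Complex.betaIntegral_convergent (u := p) (v := q) (by simpa) (by simpa)).norm.congr ?_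
  intro x hx
  rw [uIoc_of_le zero_le_one] at hx
  simp only [← ofReal_rpow_mul_one_sub_rpow p q (Ioc_subset_Icc_self hx), Complex.norm_real]
  exact norm_of_nonneg
    (mul_nonneg (rpow_nonneg hx.1.le _) (rpow_nonneg (sub_nonneg.2 hx.2) _))

lemma integral_beta {p q : ℝ} (hp : 0 < p) (hq : 0 < q) :
    ∫ x in (0 : ℝ)..1, x ^ (p - 1) * (1 - x) ^ (q - 1) = Gamma p * Gamma q / Gamma (p + q) := by
  have hcast : ((∫ x in (0 : ℝ)..1, x ^ (p - 1) * (1 - x) ^ (q - 1) : ℝ) : ℂ) =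
      Complex.betaIntegral p q := by
    rw [Complex.betaIntegral, ← intervalIntegral.integral_ofReal]
    refine intervalIntegral.integral_congr fun x hx => ?_
    rw [uIcc_of_le zero_le_one] at hx
    exact ofReal_rpow_mul_one_sub_rpow p q hx
  rw [← ProbabilityTheory.beta, ProbabilityTheory.beta_eq_betaIntegralReal p q hp hq, ← hcast,
    Complex.ofReal_re]

variable {α a : ℝ}

lemma one_sub_rpow_le {σ : ℝ} (hσ : σ ∈ Ioc 0 1) : 1 - σ ^ a ≤ max a 1 * (1 - σ) := by
  have hbernoulli : 1 + max a 1 * (σ - 1) ≤ σ ^ max a 1 := by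
    simpa using one_add_mul_self_le_rpow_one_add (s := σ - 1) (by linarith [hσ.1])
      (le_max_right a 1)
  linarith [rpow_le_rpow_of_exponent_ge hσ.1 hσ.2 (le_max_left a 1)]

lemma one_sub_mul_rpow {σ : ℝ} (hσ : σ < 1) :
    (1 - σ) * (1 - σ) ^ (-α - 1) = (1 - σ) ^ (-α) := by
  have : 1 - σ ≠ 0 := (sub_pos.2 hσ).ne'
  rw [rpow_sub_one this, mul_div_cancel₀ _ this]

lemma one_sub_rpow_mul_nonneg (ha : 0 ≤ a) {σ : ℝ} (hσ : σ ∈ Ioc (0 : ℝ) 1) (p : ℝ) :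
    0 ≤ (1 - σ ^ a) * (1 - σ) ^ p :=
  mul_nonneg (sub_nonneg.2 (rpow_le_one hσ.1.le hσ.2 ha)) (rpow_nonneg (sub_nonneg.2 hσ.2) p)

lemma intervalIntegrable_one_sub_rpow_mul (hα1 : α < 1) (ha : 0 ≤ a) :
    IntervalIntegrable (fun σ => (1 - σ ^ a) * (1 - σ) ^ (-α - 1)) volume 0 1 := by
  have hdom : IntervalIntegrable (fun σ : ℝ => max a 1 * (1 - σ) ^ (-α)) volume 0 1 := by
    have := intervalIntegral.intervalIntegrable_rpow' (r := -α) (by linarith) (a := 1) (b := 0)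
    simpa using (this.comp_sub_left 1).const_mul (max a 1)
  refine hdom.mono_fun' (by fun_prop) ?_
  rw [uIoc_of_le zero_le_one]
  refine (ae_restrict_iff' measurableSet_Ioc).2 (ae_of_all _ fun σ hσ => ?_)
  beta_reduce
  rw [norm_of_nonneg (one_sub_rpow_mul_nonneg ha hσ _)]
  rcases hσ.2.eq_or_lt with rfl | hσ1
  · simp only [one_rpow, sub_self, zero_mul]
    positivity
  · rw [← one_sub_mul_rpow hσ1, ← mul_assoc]
    exact mul_le_mul_of_nonneg_right (one_sub_rpow_le hσ) (rpow_nonneg (sub_pos.2 hσ1).le _)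

lemma tendsto_one_sub_rpow_mul_nhdsLT_one (hα1 : α < 1) (ha : 0 ≤ a) :
    Tendsto (fun σ : ℝ => (1 - σ ^ a) * (1 - σ) ^ (-α)) (𝓝[<] 1) (𝓝 0) := by
  have hlim : Tendsto (fun σ : ℝ => max a 1 * (1 - σ) ^ (1 - α)) (𝓝[<] 1) (𝓝 0) := by
    have hcont : ContinuousAt (fun σ : ℝ => max a 1 * (1 - σ) ^ (1 - α)) 1 :=
      continuousAt_const.mul ((continuousAt_const.sub continuousAt_id).rpow_const
        (Or.inr (by linarith)))
    simpa [zero_rpow (sub_pos.2 hα1).ne'] using hcont.tendsto.mono_left nhdsWithin_le_nhds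
  refine squeeze_zero' ?_ ?_ hlim
  all_goals filter_upwards [Ioo_mem_nhdsLT (zero_lt_one (α := ℝ))] with σ hσ
  · exact one_sub_rpow_mul_nonneg ha ⟨hσ.1, hσ.2.le⟩ _
  · have hσ' : 0 < 1 - σ := sub_pos.2 hσ.2
    rw [sub_eq_add_neg 1 α, rpow_one_add' hσ'.le (by linarith), ← mul_assoc]
    exact mul_le_mul_of_nonneg_right (one_sub_rpow_le ⟨hσ.1, hσ.2.le⟩) (rpow_nonneg hσ'.le _)

/-- The Caputo derivative of order `α` of `f` at `1`, with starting point `0`. It is written in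
Marchaud form, i.e. after an integration by parts, so that `f` need not be differentiated. -/
noncomputable def caputoAtOne (α : ℝ) (f : ℝ → ℝ) : ℝ :=
  (f 1 - f 0 + α * ∫ σ in (0 : ℝ)..1, (f 1 - f σ) * (1 - σ) ^ (-α - 1)) / Gamma (1 - α)

lemma caputoAtOne_const_mul (c : ℝ) (f : ℝ → ℝ) :
    caputoAtOne α (fun σ => c * f σ) = c * caputoAtOne α f := by
  simp only [caputoAtOne, ← mul_sub, mul_assoc, intervalIntegral.integral_const_mul]
  ring

lemma integral_mul_rpow_mul_one_sub_rpow (hα1 : α < 1) (ha : 0 < a) :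
    ∫ σ in (0 : ℝ)..1, a * (σ ^ (a - 1) * (1 - σ) ^ (-α)) =
      Gamma (1 + a) / Gamma (1 + a - α) * Gamma (1 - α) := by
  have hbeta := integral_beta ha (sub_pos.2 hα1)
  rw [sub_right_comm, sub_self, zero_sub] at hbeta
  rw [intervalIntegral.integral_const_mul, hbeta, add_comm 1 a, Gamma_add_one ha.ne',
    ← add_sub_assoc]
  ring

lemma caputoAtOne_rpow (hα1 : α < 1) (ha : 0 < a) :
    caputoAtOne α (fun σ => σ ^ a) = Gamma (1 + a) / Gamma (1 + a - α) := by
  have hmarchaud := (intervalIntegrable_one_sub_rpow_mul hα1 ha.le).const_mul α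
  have hbeta : IntervalIntegrable (fun σ : ℝ => a * (σ ^ (a - 1) * (1 - σ) ^ (-α))) volume 0 1 := by
    simpa [sub_right_comm] using (intervalIntegrable_beta ha (sub_pos.2 hα1)).const_mul a
  have hparts := intervalIntegral.integral_eq_sub_of_hasDerivAt_of_tendsto (a := 0) (b := 1)
    (f := fun σ : ℝ => (1 - σ ^ a) * (1 - σ) ^ (-α))
    (f' := fun σ : ℝ => α * ((1 - σ ^ a) * (1 - σ) ^ (-α - 1)) - a * (σ ^ (a - 1) * (1 - σ) ^ (-α)))
    (fa := 1) (fb := 0) zero_lt_one ?_ (hmarchaud.sub hbeta) ?_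
    (tendsto_one_sub_rpow_mul_nhdsLT_one hα1 ha.le)
  · rw [intervalIntegral.integral_sub hmarchaud hbeta, integral_mul_rpow_mul_one_sub_rpow hα1 ha,
      intervalIntegral.integral_const_mul] at hparts
    simp only [caputoAtOne, one_rpow, zero_rpow ha.ne']
    rw [div_eq_iff (Gamma_pos_of_pos (sub_pos.2 hα1)).ne']
    linarith
  · intro σ hσ
    have hleft : HasDerivAt (fun σ : ℝ => 1 - σ ^ a) (-(a * σ ^ (a - 1))) σ :=
      (hasDerivAt_rpow_const (Or.inl hσ.1.ne')).const_sub 1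
    have hright : HasDerivAt (fun σ : ℝ => (1 - σ) ^ (-α)) (-1 * -α * (1 - σ) ^ (-α - 1)) σ :=
      ((hasDerivAt_id σ).const_sub 1).rpow_const (Or.inl (sub_pos.2 hσ.2).ne')
    exact (hleft.fun_mul hright).congr_deriv (by ring)
  · have hcont : ContinuousAt (fun σ : ℝ => (1 - σ ^ a) * (1 - σ) ^ (-α)) 0 :=
      (continuousAt_const.sub (continuousAt_rpow_const _ _ (Or.inr ha.le))).mul
        ((continuousAt_const.sub continuousAt_id).rpow_const (Or.inl (by simp)))
    simpa [zero_rpow ha.ne'] using hcont.tendsto.mono_left (nhdsWithin_le_nhds (s := Ioi 0))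

lemma mul_mittagLefflerTerm_succ_mul_integral (hα : 0 < α) (hα1 : α < 1) (r : ℝ) (k : ℕ) :
    α * (mittagLefflerTerm α r (k + 1) *
        ∫ σ in (0 : ℝ)..1, (1 - σ ^ ((k + 1 : ℕ) * α)) * (1 - σ) ^ (-α - 1)) =
      Gamma (1 - α) * r * mittagLefflerTerm α r k - mittagLefflerTerm α r (k + 1) := by
  have hpos : 0 < (k + 1 : ℕ) * α := by positivity
  have hrpow := caputoAtOne_rpow hα1 hpos
  simp only [caputoAtOne, one_rpow, zero_rpow hpos.ne'] at hrpow
  rw [div_eq_iff (Gamma_pos_of_pos (sub_pos.2 hα1)).ne', sub_zero, ← eq_sub_iff_add_eq',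
    show 1 + (k + 1 : ℕ) * α - α = 1 + k * α by push_cast; ring] at hrpow
  rw [mul_left_comm, hrpow, mittagLefflerTerm, mittagLefflerTerm, pow_succ]
  have := (Gamma_one_add_nat_mul_pos hα.le k).ne'
  have := (Gamma_one_add_nat_mul_pos hα.le (k + 1)).ne'
  field_simp

lemma hasSum_mittagLefflerTerm_mul_integral (hα : 0 < α) (hα1 : α < 1) (r : ℝ) :
    HasSum (fun k : ℕ => mittagLefflerTerm α r k *
        ∫ σ in (0 : ℝ)..1, (1 - σ ^ (k * α)) * (1 - σ) ^ (-α - 1))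
      (α⁻¹ * (Gamma (1 - α) * r * mittagLeffler α r - (mittagLeffler α r - 1))) := by
  have hsum := hasSum_mittagLeffler hα r
  have hsucc : HasSum (fun k => mittagLefflerTerm α r (k + 1)) (mittagLeffler α r - 1) := by
    simpa [mittagLefflerTerm_zero] using (hasSum_nat_add_iff' 1).2 hsum
  rw [← hasSum_nat_add_iff' 1]
  simp only [Finset.sum_range_one, Nat.cast_zero, zero_mul, rpow_zero, sub_self,
    intervalIntegral.integral_zero, mul_zero, sub_zero]
  refine (((hsum.mul_left (Gamma (1 - α) * r)).sub hsucc).mul_left α⁻¹).congr_fun fun k => ?_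
  rw [← mul_mittagLefflerTerm_succ_mul_integral hα hα1, inv_mul_cancel_left₀ hα.ne']

lemma hasSum_mittagLefflerTerm_mul_one_sub_rpow (hα : 0 < α) (r : ℝ) {σ : ℝ} (hσ : 0 ≤ σ) :
    HasSum (fun k : ℕ => mittagLefflerTerm α r k * (1 - σ ^ (k * α)))
      (mittagLeffler α r - mittagLeffler α (r * σ ^ α)) := by
  refine ((hasSum_mittagLeffler hα r).sub (hasSum_mittagLeffler hα (r * σ ^ α))).congr_fun
    fun k => ?_
  rw [mul_comm r, mittagLefflerTerm_mul, mul_comm (k : ℝ), rpow_mul_natCast hσ]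
  ring

lemma integral_mittagLeffler_sub_mul_rpow (hα : 0 < α) (hα1 : α < 1) (r : ℝ) :
    ∫ σ in (0 : ℝ)..1, (mittagLeffler α r - mittagLeffler α (r * σ ^ α)) * (1 - σ) ^ (-α - 1) =
      α⁻¹ * (Gamma (1 - α) * r * mittagLeffler α r - (mittagLeffler α r - 1)) := by
  set f : ℕ → ℝ → ℝ := fun k σ =>
    mittagLefflerTerm α r k * ((1 - σ ^ (k * α)) * (1 - σ) ^ (-α - 1))
  have hint (k : ℕ) : IntegrableOn (f k) (Ioc 0 1) :=
    ((intervalIntegrable_one_sub_rpow_mul hα1 (by positivity)).const_mul _).1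
  have hnorm (k : ℕ) : ∫ σ in Ioc 0 1, ‖f k σ‖ = mittagLefflerTerm α |r| k *
      ∫ σ in (0 : ℝ)..1, (1 - σ ^ (k * α)) * (1 - σ) ^ (-α - 1) := by
    rw [← intervalIntegral.integral_const_mul, intervalIntegral.integral_of_le zero_le_one]
    refine setIntegral_congr_fun measurableSet_Ioc fun σ hσ => ?_
    simp only [f]
    rw [norm_mul, norm_mittagLefflerTerm hα.le,
      norm_of_nonneg (one_sub_rpow_mul_nonneg (by positivity) hσ _)]
  have hsum : Summable fun k => ∫ σ in Ioc 0 1, ‖f k σ‖ := by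
    simpa only [hnorm] using (hasSum_mittagLefflerTerm_mul_integral hα hα1 |r|).summable
  have hterm : HasSum (fun k => ∫ σ in Ioc 0 1, f k σ) (∫ σ in Ioc 0 1, ∑' k, f k σ) :=
    hasSum_integral_of_summable_integral_norm hint hsum
  simp only [f, ← intervalIntegral.integral_of_le zero_le_one,
    intervalIntegral.integral_const_mul] at hterm
  rw [← hterm.unique (hasSum_mittagLefflerTerm_mul_integral hα hα1 r)]
  refine intervalIntegral.integral_congr fun σ hσ => ?_
  rw [uIcc_of_le zero_le_one] at hσ
  simp only [← mul_assoc]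
  exact ((hasSum_mittagLefflerTerm_mul_one_sub_rpow hα r hσ.1).mul_right _).tsum_eq.symm

lemma caputoAtOne_mittagLeffler (hα : 0 < α) (hα1 : α < 1) (r : ℝ) :
    caputoAtOne α (fun σ => mittagLeffler α (r * σ ^ α)) = r * mittagLeffler α r := by
  simp only [caputoAtOne, one_rpow, mul_one, zero_rpow hα.ne', mul_zero, mittagLeffler_zero hα,
    integral_mittagLeffler_sub_mul_rpow hα hα1]
  rw [mul_inv_cancel_left₀ hα.ne', div_eq_iff (Gamma_pos_of_pos (sub_pos.2 hα1)).ne']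
  ring

lemma le_caputoAtOne (hα : 0 ≤ α) (hα1 : α < 1) {f g : ℝ → ℝ}
    (hg : IntervalIntegrable g volume 0 1) (hg0 : ∀ σ ∈ Ioc (0 : ℝ) 1, 0 ≤ g σ)
    (hfg : ∀ σ ∈ Ioc (0 : ℝ) 1, (f σ - f 1) * (1 - σ) ^ (-α - 1) ≤ g σ) :
    (f 1 - f 0 - α * ∫ σ in (0 : ℝ)..1, g σ) / Gamma (1 - α) ≤ caputoAtOne α f := by
  have hle : -∫ σ in (0 : ℝ)..1, g σ ≤ ∫ σ in (0 : ℝ)..1, (f 1 - f σ) * (1 - σ) ^ (-α - 1) := by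
    rw [← intervalIntegral.integral_neg, intervalIntegral.integral_of_le zero_le_one,
      intervalIntegral.integral_of_le zero_le_one]
    by_cases hf : IntegrableOn (fun σ => (f 1 - f σ) * (1 - σ) ^ (-α - 1)) (Ioc 0 1)
    · exact setIntegral_mono_on hg.1.neg hf measurableSet_Ioc fun σ hσ => by linarith [hfg σ hσ]
    · -- The integral of a non-integrable function is `0`.
      rw [integral_undef hf]
      exact setIntegral_nonpos measurableSet_Ioc fun σ hσ => neg_nonpos.2 (hg0 σ hσ)
  have := Gamma_pos_of_pos (sub_pos.2 hα1)
  unfold caputoAtOne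
  gcongr
  nlinarith

end FractionalDerivative

section Decay

variable {α : ℝ}

lemma sub_mul_one_sub_rpow_le (hα : 0 ≤ α) (hα1 : α ≤ 1) {m σ F G : ℝ} (hm : 0 ≤ m)
    (hσ : σ ∈ Ioo (0 : ℝ) 1) (hF : 0 ≤ F) (hG : 0 ≤ G)
    (hFG : (1 + m * σ ^ α) * G ≤ (1 + m) * F) :
    (G - F) * (1 - σ) ^ (-α - 1) ≤ F * (σ ^ (-α) * (1 - σ) ^ (-α)) := by
  have hσα : 0 < σ ^ α := rpow_pos_of_pos hσ.1 α
  have hσα_le : σ ^ α ≤ 1 := rpow_le_one hσ.1.le hσ.2.le hα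
  have hσ_le : σ ≤ σ ^ α := by
    simpa using rpow_le_rpow_of_exponent_ge hσ.1 hσ.2.le hα1
  have hσG : σ ^ α * G ≤ F := by
    refine le_of_mul_le_mul_left (hFG.trans' ?_) (show 0 < 1 + m by positivity)
    rw [← mul_assoc]
    gcongr
    linarith
  have hsub : G - F ≤ F * σ ^ (-α) * (1 - σ) := by
    have hG_le : G ≤ F * σ ^ (-α) := by
      rw [rpow_neg hσ.1.le, ← div_eq_mul_inv]
      exact (le_div_iff₀' hσα).2 hσG
    have hF_ge : F * σ ^ (-α) * σ ≤ F := by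
      rw [mul_assoc, rpow_neg hσ.1.le, ← div_eq_inv_mul]
      exact mul_le_of_le_one_right hF ((div_le_one hσα).2 hσ_le)
    linarith
  calc (G - F) * (1 - σ) ^ (-α - 1) ≤ F * σ ^ (-α) * (1 - σ) * (1 - σ) ^ (-α - 1) :=
        mul_le_mul_of_nonneg_right hsub (rpow_nonneg (sub_pos.2 hσ.2).le _)
    _ = F * (σ ^ (-α) * (1 - σ) ^ (-α)) := by
        rw [mul_assoc _ (1 - σ), one_sub_mul_rpow hσ.2, mul_assoc]

-- Maximum principle: the Caputo derivative of `σ ↦ ± E_α(-m σ^α)` at `1` is `-m |E_α(-m)|`, and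
-- is bounded below because `(1 + m σ^α) |E_α(-m σ^α)|` is maximal at `σ = 1`.
lemma mul_abs_mittagLeffler_neg_le_one (hα : 0 < α) (hα1 : α < 1) {m : ℝ} (hm : 0 ≤ m)
    (hmax : ∀ σ ∈ Ioc (0 : ℝ) 1, (1 + m * σ ^ α) * |mittagLeffler α (-(m * σ ^ α))| ≤
      (1 + m) * |mittagLeffler α (-m)|) :
    (Gamma (1 - α) * m + 1 - α * ∫ σ in (0 : ℝ)..1, σ ^ (-α) * (1 - σ) ^ (-α)) *
      |mittagLeffler α (-m)| ≤ 1 := by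
  set F := |mittagLeffler α (-m)|
  obtain ⟨s, hsF, hs⟩ : ∃ s : ℝ, s * mittagLeffler α (-m) = F ∧ ∀ y, s * y ≤ |y| := by
    rcases abs_choice (mittagLeffler α (-m)) with h | h
    · exact ⟨1, by rw [one_mul, ← h], fun y => by simpa using le_abs_self y⟩
    · exact ⟨-1, by rw [neg_one_mul, ← h], fun y => by simpa using neg_le_abs y⟩
  have hint : IntervalIntegrable (fun σ : ℝ => F * (σ ^ (-α) * (1 - σ) ^ (-α))) volume 0 1 := by
    have hα1' := sub_pos.2 hα1
    simpa [sub_right_comm] using (intervalIntegrable_beta hα1' hα1').const_mul F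
  have hnonneg : ∀ σ ∈ Ioc (0 : ℝ) 1, 0 ≤ F * (σ ^ (-α) * (1 - σ) ^ (-α)) := fun σ hσ =>
    mul_nonneg (abs_nonneg _)
      (mul_nonneg (rpow_nonneg hσ.1.le _) (rpow_nonneg (sub_nonneg.2 hσ.2) _))
  have hcaputo := le_caputoAtOne hα.le hα1 (f := fun σ => s * mittagLeffler α (-m * σ ^ α)) hint
    hnonneg fun σ hσ => ?_
  · rw [caputoAtOne_const_mul, caputoAtOne_mittagLeffler hα hα1,
      div_le_iff₀ (Gamma_pos_of_pos (sub_pos.2 hα1)),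
      intervalIntegral.integral_const_mul] at hcaputo
    simp only [one_rpow, mul_one, zero_rpow hα.ne', mul_zero, mittagLeffler_zero hα, hsF,
      mul_left_comm s, ← mul_assoc] at hcaputo
    have hs_one : s ≤ 1 := by simpa using hs 1
    linarith
  · simp only [one_rpow, mul_one, hsF]
    rcases hσ.2.eq_or_lt with rfl | hσ1
    · simpa [hsF] using hnonneg 1 hσ
    · refine (mul_le_mul_of_nonneg_right (sub_le_sub_right (hs _) F)
        (rpow_nonneg (sub_nonneg.2 hσ.2) _)).trans ?_
      rw [neg_mul]
      exact sub_mul_one_sub_rpow_le hα.le hα1.le hm ⟨hσ.1, hσ1⟩ (abs_nonneg _) (abs_nonneg _)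
        (hmax σ hσ)

lemma exists_one_add_mul_abs_mittagLeffler_neg_le (hα : 0 < α) (hα1 : α < 1) :
    ∃ C, ∀ s ≥ 0, (1 + s) * |mittagLeffler α (-s)| ≤ C := by
  have hΓ : 0 < Gamma (1 - α) := Gamma_pos_of_pos (sub_pos.2 hα1)
  set B := ∫ σ in (0 : ℝ)..1, σ ^ (-α) * (1 - σ) ^ (-α)
  set φ : ℝ → ℝ := fun s => (1 + s) * |mittagLeffler α (-s)|
  have hφ : Continuous φ := by
    have := (continuous_mittagLeffler hα).comp continuous_neg
    exact (by fun_prop : Continuous fun s : ℝ => 1 + s).mul this.abs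
  obtain ⟨C₀, hC₀⟩ := (isCompact_Icc (a := 0) (b := 2 * α * B / Gamma (1 - α))).bddAbove_image
    hφ.continuousOn
  refine ⟨max C₀ (1 + 2 / Gamma (1 - α)), fun s hs => ?_⟩
  obtain ⟨m, hm, hmax⟩ := isCompact_Icc.exists_isMaxOn (nonempty_Icc.2 hs) hφ.continuousOn
  refine (hmax (right_mem_Icc.2 hs)).trans ?_
  rcases le_or_gt m (2 * α * B / Gamma (1 - α)) with hmB | hmB
  · exact le_max_of_le_left (hC₀ (mem_image_of_mem φ ⟨hm.1, hmB⟩))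
  refine le_max_of_le_right ?_
  have hle := mul_abs_mittagLeffler_neg_le_one hα hα1 hm.1 fun σ hσ => by
    have hσ1 : m * σ ^ α ≤ m := mul_le_of_le_one_right hm.1 (rpow_le_one hσ.1.le hσ.2 hα.le)
    exact hmax ⟨mul_nonneg hm.1 (rpow_nonneg hσ.1.le α), hσ1.trans hm.2⟩
  have hF := abs_nonneg (mittagLeffler α (-m))
  rw [div_lt_iff₀ hΓ] at hmB
  have hm0 := hm.1
  have hhalf : (Gamma (1 - α) * m / 2 + 1) * |mittagLeffler α (-m)| ≤ 1 :=
    hle.trans' (mul_le_mul_of_nonneg_right (by linarith) hF)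
  have hF_one : |mittagLeffler α (-m)| ≤ 1 :=
    hhalf.trans' (le_mul_of_one_le_left hF (le_add_of_nonneg_left (by positivity)))
  have hmF : m * |mittagLeffler α (-m)| ≤ 2 / Gamma (1 - α) := by
    rw [le_div_iff₀ hΓ]
    linarith
  change (1 + m) * |mittagLeffler α (-m)| ≤ _
  linarith

end Decay

section Oscillation

variable {α : ℝ}

lemma one_half_le_cos_of_abs_le_one {y : ℝ} (hy : |y| ≤ 1) : 1 / 2 ≤ cos y := by
  have := one_sub_sq_div_two_le_cos (x := y)
  have := (sq_le_one_iff_abs_le_one y).2 hy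
  linarith

lemma continuous_mittagLeffler_mul_cos (hα : 0 < α) (r x : ℝ) :
    Continuous fun ξ => mittagLeffler α ((1 - ξ ^ 2) * r) * cos (x * ξ) :=
  ((continuous_mittagLeffler hα).comp (by fun_prop)).mul (by fun_prop)

lemma norm_mittagLeffler_mul_cos_le (r x ξ : ℝ) :
    ‖mittagLeffler α ((1 - ξ ^ 2) * r) * cos (x * ξ)‖ ≤ |mittagLeffler α ((1 - ξ ^ 2) * r)| := by
  rw [norm_mul, norm_eq_abs, norm_eq_abs]
  exact mul_le_of_le_one_right (abs_nonneg _) (abs_cos_le_one _)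

lemma exists_norm_mittagLeffler_mul_cos_le_rpow (hα : 0 < α) (hα1 : α < 1) :
    ∃ C, ∀ r ≥ 1, ∀ x, ∀ ξ ∈ Ioi (1 : ℝ),
      ‖mittagLeffler α ((1 - ξ ^ 2) * r) * cos (x * ξ)‖ ≤ C * ξ ^ (-2 : ℝ) := by
  obtain ⟨C, hdecay⟩ := exists_one_add_mul_abs_mittagLeffler_neg_le hα hα1
  refine ⟨C, fun r hr x ξ (hξ : 1 < ξ) => (norm_mittagLeffler_mul_cos_le r x ξ).trans ?_⟩
  have hξ2 : 0 ≤ ξ ^ 2 - 1 := by nlinarith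
  have hsq : ξ ^ 2 ≤ 1 + (ξ ^ 2 - 1) * r := by nlinarith
  rw [rpow_neg (by linarith), rpow_two, ← div_eq_mul_inv, le_div_iff₀' (by positivity),
    ← neg_sub (ξ ^ 2) 1, neg_mul]
  exact (mul_le_mul_of_nonneg_right hsq (abs_nonneg _)).trans (hdecay _ (by positivity))

lemma exists_neg_le_integral_Ioi_mittagLeffler_mul_cos (hα : 0 < α) (hα1 : α < 1) :
    ∃ C, ∀ r ≥ 1, ∀ x,
      IntegrableOn (fun ξ => mittagLeffler α ((1 - ξ ^ 2) * r) * cos (x * ξ)) (Ioi 1) ∧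
        -C ≤ ∫ ξ in Ioi 1, mittagLeffler α ((1 - ξ ^ 2) * r) * cos (x * ξ) := by
  obtain ⟨C, hbound⟩ := exists_norm_mittagLeffler_mul_cos_le_rpow hα hα1
  have hdom : IntegrableOn (fun ξ : ℝ => C * ξ ^ (-2 : ℝ)) (Ioi 1) :=
    (integrableOn_Ioi_rpow_of_lt (by norm_num) one_pos).const_mul C
  refine ⟨∫ ξ in Ioi (1 : ℝ), C * ξ ^ (-2 : ℝ), fun r hr x => ?_⟩
  have hle := (ae_restrict_iff' measurableSet_Ioi).2 (ae_of_all volume (hbound r hr x))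
  exact ⟨hdom.mono' (continuous_mittagLeffler_mul_cos hα r x).aestronglyMeasurable hle,
    (abs_le.1 (norm_integral_le_of_norm_le hdom hle)).1⟩

lemma half_mul_mittagLeffler_le_integral (hα : 0 < α) {r x ρ : ℝ} (hr : 0 ≤ r) (hρ0 : 0 ≤ ρ)
    (hρ1 : ρ ≤ 1) (hxρ : |x| * ρ ≤ 1) :
    ρ / 2 * mittagLeffler α ((1 - ρ ^ 2) * r) ≤
      ∫ ξ in (0 : ℝ)..ρ, mittagLeffler α ((1 - ξ ^ 2) * r) * cos (x * ξ) := by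
  have hρ : 0 ≤ (1 - ρ ^ 2) * r := mul_nonneg (by nlinarith) hr
  calc ρ / 2 * mittagLeffler α ((1 - ρ ^ 2) * r)
      = ∫ _ in (0 : ℝ)..ρ, mittagLeffler α ((1 - ρ ^ 2) * r) * (1 / 2) := by
        rw [intervalIntegral.integral_const, smul_eq_mul]
        ring
    _ ≤ _ := by
        refine intervalIntegral.integral_mono_on hρ0 intervalIntegrable_const
          ((continuous_mittagLeffler_mul_cos hα r x).intervalIntegrable _ _) fun ξ hξ => ?_
        have hcos : 1 / 2 ≤ cos (x * ξ) := by
          refine one_half_le_cos_of_abs_le_one (hxρ.trans' ?_)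
          rw [abs_mul, abs_of_nonneg hξ.1]
          exact mul_le_mul_of_nonneg_left hξ.2 (abs_nonneg x)
        have harg : (1 - ρ ^ 2) * r ≤ (1 - ξ ^ 2) * r := by
          have := hξ.1
          gcongr
          exact hξ.2
        have hmono := monotoneOn_mittagLeffler hα hρ (hρ.trans harg) harg
        exact mul_le_mul hmono hcos (by norm_num) ((mittagLeffler_pos hα hρ).le.trans hmono)

lemma neg_mittagLeffler_le_integral (hα : 0 < α) {r x ρ a : ℝ} (hr : 0 ≤ r) (hρ0 : 0 ≤ ρ)
    (hρa : ρ ≤ a) (ha : a ≤ 1) (hxa : |x| * a ≤ 1) :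
    -mittagLeffler α ((1 - a ^ 2) * r) ≤
      ∫ ξ in ρ..1, mittagLeffler α ((1 - ξ ^ 2) * r) * cos (x * ξ) := by
  have harg {ξ : ℝ} (hξ0 : 0 ≤ ξ) (hξ1 : ξ ≤ 1) : 0 ≤ (1 - ξ ^ 2) * r :=
    mul_nonneg (by nlinarith) hr
  have hpos : 0 ≤ mittagLeffler α ((1 - a ^ 2) * r) :=
    (mittagLeffler_pos hα (harg (hρ0.trans hρa) ha)).le
  have hρ_le : 1 - ρ ≤ 1 := sub_le_self 1 hρ0
  calc -mittagLeffler α ((1 - a ^ 2) * r)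
      ≤ ∫ _ in ρ..1, -mittagLeffler α ((1 - a ^ 2) * r) := by
        rw [intervalIntegral.integral_const, smul_eq_mul, mul_neg]
        exact neg_le_neg (mul_le_of_le_one_left hpos hρ_le)
    _ ≤ _ := by
        refine intervalIntegral.integral_mono_on (hρa.trans ha) intervalIntegrable_const
          ((continuous_mittagLeffler_mul_cos hα r x).intervalIntegrable _ _) fun ξ hξ => ?_
        have hξ0 : 0 ≤ ξ := hρ0.trans hξ.1
        have hE := mittagLeffler_pos hα (harg hξ0 hξ.2)
        rcases le_total ξ a with hξa | haξ
        · have hcos : 1 / 2 ≤ cos (x * ξ) := by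
            refine one_half_le_cos_of_abs_le_one (hxa.trans' ?_)
            rw [abs_mul, abs_of_nonneg hξ0]
            exact mul_le_mul_of_nonneg_left hξa (abs_nonneg x)
          exact (neg_nonpos.2 hpos).trans (mul_nonneg hE.le (by linarith))
        · refine (neg_le_neg ?_).trans (neg_le_of_abs_le (norm_mittagLeffler_mul_cos_le r x ξ))
          rw [abs_of_pos hE]
          refine monotoneOn_mittagLeffler hα (harg hξ0 hξ.2) (harg (hρ0.trans hρa) ha) ?_
          have := hρ0.trans hρa
          gcongr

lemma exists_sub_le_pi_mul_fundSol (hα : 0 < α) (hα1 : α < 1) :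
    ∃ C, ∀ {x t ρ a : ℝ}, 1 ≤ t → 0 ≤ ρ → ρ ≤ a → a ≤ 1 → |x| * a ≤ 1 →
      ρ / 2 * mittagLeffler α ((1 - ρ ^ 2) * t ^ α) - mittagLeffler α ((1 - a ^ 2) * t ^ α) - C ≤
        π * fundSol α x t := by
  obtain ⟨C, hC⟩ := exists_neg_le_integral_Ioi_mittagLeffler_mul_cos hα hα1
  refine ⟨C, fun {x t ρ a} ht hρ0 hρa ha hxa => ?_⟩
  have hr : 1 ≤ t ^ α := one_le_rpow ht hα.le
  obtain ⟨hint, htail⟩ := hC (t ^ α) hr x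
  have hii (p q : ℝ) := (continuous_mittagLeffler_mul_cos hα (t ^ α) x).intervalIntegrable
    (μ := volume) p q
  have hcore := half_mul_mittagLeffler_le_integral hα (by linarith : 0 ≤ t ^ α) hρ0 (hρa.trans ha)
    (hxa.trans' (mul_le_mul_of_nonneg_left hρa (abs_nonneg x)))
  have hosc := neg_mittagLeffler_le_integral hα (by linarith : 0 ≤ t ^ α) hρ0 hρa ha hxa
  rw [fundSol, ← mul_assoc, mul_one_div_cancel pi_ne_zero, one_mul,
    ← intervalIntegral.integral_interval_add_Ioi' (hii 0 1) hint,
    ← intervalIntegral.integral_add_adjacent_intervals (hii 0 ρ) (hii ρ 1)]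
  linarith

end Oscillation

section LowerBound

variable {α : ℝ}

lemma eventually_mul_exp_neg_mul_rpow_le {b p K : ℝ} (hb : 0 < b) (hp : 0 < p) (hK : 0 < K)
    (c s : ℝ) : ∀ᶠ t : ℝ in atTop, c * exp (-(b * t ^ p)) ≤ K * t ^ s := by
  have hlim : Tendsto (fun t : ℝ => c * (t ^ (-s) * exp (-b * t ^ p))) atTop (𝓝 (c * 0)) := by
    refine (((tendsto_rpow_mul_exp_neg_mul_atTop_nhds_zero (-s / p) b hb).comp
      (tendsto_rpow_atTop hp)).congr' ?_).const_mul c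
    filter_upwards [eventually_gt_atTop 0] with t ht
    rw [Function.comp_apply, ← rpow_mul ht.le, mul_div_cancel₀ _ hp.ne']
  filter_upwards [hlim.eventually_le_const (by rwa [mul_zero]), eventually_gt_atTop 0] with t hle ht
  rwa [rpow_neg ht.le, mul_left_comm, ← div_eq_inv_mul, div_le_iff₀ (by positivity), neg_mul]
    at hle

lemma eventually_mittagLeffler_one_sub_sq_le (hα : 0 < α) {γ K : ℝ} (hγ0 : 0 ≤ γ)
    (hγ : γ < 1 / 2) (hK : 0 < K) (s : ℝ) :
    ∀ᶠ t in atTop, mittagLeffler α ((1 - (t ^ (-γ)) ^ 2) * t ^ α) ≤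
      K * t ^ s * mittagLeffler α (t ^ α) := by
  obtain ⟨b, hb, hosc⟩ := exists_mittagLeffler_one_sub_mul_rpow_le hα
  filter_upwards [hosc, eventually_ge_atTop 1,
    eventually_mul_exp_neg_mul_rpow_le hb (by linarith : 0 < 1 - 2 * γ) hK 2 s]
    with t hosc_t ht hexp
  have ht0 : 0 < t := by linarith
  have hE := mittagLeffler_pos hα (rpow_nonneg ht0.le α)
  have hle_one : t ^ (-γ) ≤ 1 := rpow_le_one_of_one_le_of_nonpos ht (neg_nonpos.2 hγ0)
  have hsq : t * (t ^ (-γ)) ^ 2 = t ^ (1 - 2 * γ) := by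
    rw [← rpow_mul_natCast ht0.le, ← rpow_one_add' ht0.le (by push_cast; linarith)]
    push_cast
    ring_nf
  refine (hosc_t ((t ^ (-γ)) ^ 2) ⟨sq_nonneg _, pow_le_one₀ (by positivity) hle_one⟩).trans ?_
  rw [mul_assoc b, hsq]
  gcongr

lemma exists_eventually_rpow_mul_mittagLeffler_le_fundSol (hα : 0 < α) (hα1 : α < 1) {γ : ℝ}
    (hγ0 : 0 ≤ γ) (hγ : γ < 1 / 2) :
    ∃ K > 0, ∀ᶠ t in atTop, ∀ x, |x| ≤ t ^ γ →
      K * t ^ (-(1 / 2) : ℝ) * mittagLeffler α (t ^ α) ≤ fundSol α x t := by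
  obtain ⟨κ, hκ, hcore⟩ := exists_le_mittagLeffler_one_sub_mul_rpow hα
  obtain ⟨C, hC⟩ := exists_sub_le_pi_mul_fundSol hα hα1
  have hκ0 : 0 < √κ := sqrt_pos.2 hκ.1
  refine ⟨√κ / (16 * π), by positivity, ?_⟩
  filter_upwards [eventually_ge_atTop 1,
    eventually_mittagLeffler_one_sub_sq_le hα hγ0 hγ (by positivity : 0 < √κ / 32) (-(1 / 2)),
    (tendsto_rpow_mul_mittagLeffler_rpow_atTop hα (-(1 / 2))).eventually_ge_atTop (C / (√κ / 32))]
    with t ht hosc hC_t x hx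
  have ht0 : 0 < t := by linarith
  have hE := mittagLeffler_pos hα (rpow_nonneg ht0.le α)
  set E := mittagLeffler α (t ^ α)
  set ρ := √κ * t ^ (-(1 / 2) : ℝ)
  set a := t ^ (-γ)
  have hρ_sq : ρ ^ 2 = κ / t := by
    rw [mul_pow, sq_sqrt hκ.1.le, ← rpow_mul_natCast ht0.le]
    norm_num [rpow_neg_one, div_eq_mul_inv]
  have hρa : ρ ≤ a :=
    (mul_le_of_le_one_left (by positivity) (sqrt_le_one.2 hκ.2)).trans
      (rpow_le_rpow_of_exponent_le ht (by linarith))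
  have ha : a ≤ 1 := rpow_le_one_of_one_le_of_nonpos ht (neg_nonpos.2 hγ0)
  have hxa : |x| * a ≤ 1 := by
    simp only [a]
    rw [rpow_neg ht0.le, ← div_eq_mul_inv]
    exact (div_le_one (by positivity)).2 hx
  have hcore_ρ : E / 4 ≤ mittagLeffler α ((1 - ρ ^ 2) * t ^ α) :=
    hcore t ht (ρ ^ 2) ⟨sq_nonneg ρ, hρ_sq.le⟩
  have hC_E : C ≤ √κ / 32 * t ^ (-(1 / 2) : ℝ) * E := by
    rwa [div_le_iff₀' (by positivity), ← mul_assoc] at hC_t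
  refine le_of_mul_le_mul_left ((hC ht (by positivity) hρa ha hxa).trans' ?_) pi_pos
  calc π * (√κ / (16 * π) * t ^ (-(1 / 2) : ℝ) * E)
      = ρ / 2 * (E / 4) - √κ / 32 * t ^ (-(1 / 2) : ℝ) * E - √κ / 32 * t ^ (-(1 / 2) : ℝ) * E := by
        simp only [ρ]
        field_simp
        ring
    _ ≤ _ := by gcongr

lemma eventually_mul_rpow_le_mul_rpow {p q : ℝ} (hpq : p < q) {K : ℝ} (hK : 0 < K) (M : ℝ) :
    ∀ᶠ t : ℝ in atTop, M * t ^ p ≤ K * t ^ q := by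
  filter_upwards [(tendsto_rpow_atTop (sub_pos.2 hpq)).eventually_ge_atTop (M / K),
    eventually_gt_atTop 0] with t hle ht
  rw [div_le_iff₀' hK, rpow_sub ht, ← mul_div_assoc, le_div_iff₀ (by positivity)] at hle
  exact hle

end LowerBound

theorem fundSol_lower_bound_general {α β s : ℝ} (c M : ℝ) (hα : 0 < α) (hα1 : α < 1)
    (hβ : β < 1 / 2) (hs : s < -(1 / 2)) :
    ∀ᶠ t in atTop, M * t ^ s * mittagLeffler α (t ^ α) ≤ fundSol α (c * t ^ β) t := by
  obtain ⟨γ, hβγ, hγ⟩ := exists_between (max_lt hβ one_half_pos)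
  obtain ⟨hβγ, hγ0⟩ := max_lt_iff.1 hβγ
  obtain ⟨K, hK, hbound⟩ :=
    exists_eventually_rpow_mul_mittagLeffler_le_fundSol hα hα1 hγ0.le hγ
  filter_upwards [hbound, eventually_mul_rpow_le_mul_rpow hβγ one_pos |c|,
    eventually_mul_rpow_le_mul_rpow hs hK M, eventually_gt_atTop 0] with t hbound_t hx hM ht
  have hE := mittagLeffler_pos hα (rpow_nonneg ht.le α)
  refine (mul_le_mul_of_nonneg_right hM hE.le).trans (hbound_t _ ?_)
  rwa [abs_mul, abs_of_pos (rpow_pos_of_pos ht β), ← one_mul (t ^ γ)]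

theorem fundSol_lower_bound (α c β : ℝ) (hα : 1 / 2 ≤ α) (hα1 : α < 1)
    (hc : 0 < c) (hβ : 0 < β) (hβ' : β < 1 / 2) :
    ∀ ε > (0 : ℝ), ∃ T > (0 : ℝ), ∀ t : ℝ, T ≤ t →
      fundSol α (c * t ^ β) t ≥
        (1 - ε) * c * α * t ^ (β - 2 * α) * mittagLeffler α (t ^ α) := by
  intro ε _
  exact (eventually_forall_ge_atTop.2 (fundSol_lower_bound_general c ((1 - ε) * c * α)
    (by linarith) hα1 hβ' (by linarith)) |>.and (eventually_gt_atTop 0)).exists.imp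
    fun _ h => ⟨h.2, h.1⟩
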